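/- arXiv:1904.11149 — 3 statements merged into one kernel-verified Lean document; each statement's English description precedes it below -/
import Mathlib

section
/- Let r > 1/2 and let z_n > 0 with y_n = 1/z_n satisfying y_n ≥ n + n^r eventually. Then χ_{z_n}^{(n)} = (y_n/(y_n−n)) (1 − y_n/(y_n−n)² + O(y_n²/(y_n−n)⁴)) as n → ∞. In particular χ_{z_n}^{(n)} ∼ y_n/(y_n − n). -/
open Finset Filter Asymptotics

/-- `c_N^{(n)} = (n-1)!/(n-1-N)!`, the number of `N`-step self-avoiding walks on `K_n`. -/
noncomputable def sawCount (n N : ℕ) : ℝ :=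
  (Nat.factorial (n - 1) : ℝ) / (Nat.factorial (n - 1 - N) : ℝ)

/-- The susceptibility `χ_z^{(n)} = ∑_{N=0}^{n-1} c_N^{(n)} z^N`. -/
noncomputable def chi (n : ℕ) (z : ℝ) : ℝ :=
  ∑ N ∈ Finset.range n, sawCount n N * z ^ N

lemma chi_one (z : ℝ) : chi 1 z = 1 := by
  simp [chi, sawCount]

lemma chi_rec (m : ℕ) (z : ℝ) : chi (m + 2) z = 1 + (m + 1) * z * chi (m + 1) z := by
  unfold chi
  rw [Finset.sum_range_succ', Finset.mul_sum, add_comm]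
  congr 1
  · have : ((m + 1).factorial : ℝ) ≠ 0 := by positivity
    simp [sawCount, this]
  · refine Finset.sum_congr rfl fun N _ => ?_
    unfold sawCount
    have h1 : m + 2 - 1 = m + 1 := by omega
    have h2 : m + 1 - (N + 1) = m - N := by omega
    rw [h1, h2, Nat.factorial_succ]
    simp only [Nat.add_sub_cancel]
    push_cast
    ring

lemma resid_bound (y d : ℝ) (hd : 1 ≤ d) (hy : d + 1 ≤ y) :
    |y * (-1 / (d * (d + 1) ^ 2)) + y ^ 2 * (1 / d ^ 3 - 1 / (d + 1) ^ 3)|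
      ≤ 26 * y ^ 2 / (d + 1) ^ 4 := by
  have hd0 : 0 < d := by linarith
  have e1 : 1 / d ^ 3 - 1 / (d + 1) ^ 3 = (3 * d ^ 2 + 3 * d + 1) / (d ^ 3 * (d + 1) ^ 3) := by
    field_simp
    ring
  have hA : y * (1 / (d * (d + 1) ^ 2)) ≤ 2 * y ^ 2 / (d + 1) ^ 4 := by
    rw [mul_one_div, div_le_div_iff₀ (by positivity) (by positivity)]
    have : (d + 1) ^ 2 ≤ 2 * y * d := by nlinarith
    have h2 : 0 ≤ y * (d + 1) ^ 2 := by have : 0 ≤ y := by linarith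
                                        positivity
    nlinarith [mul_le_mul_of_nonneg_left this h2]
  have hB : (3 * d ^ 2 + 3 * d + 1) / (d ^ 3 * (d + 1) ^ 3) ≤ 24 / (d + 1) ^ 4 := by
    rw [div_le_div_iff₀ (by positivity) (by positivity)]
    have : (3 * d ^ 2 + 3 * d + 1) * (d + 1) ≤ 24 * d ^ 3 := by
      nlinarith [mul_nonneg (sub_nonneg.2 hd) (sub_nonneg.2 hd), pow_pos hd0 2,
        mul_nonneg (sub_nonneg.2 hd) (pow_pos hd0 2).le, mul_nonneg (sub_nonneg.2 hd) hd0.le]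
    have h2 : 0 ≤ (d + 1) ^ 3 := by positivity
    nlinarith [mul_le_mul_of_nonneg_left this h2]
  have hB' := mul_le_mul_of_nonneg_left hB (sq_nonneg y)
  rw [← e1] at hB'
  have hA0 : 0 ≤ y * (1 / (d * (d + 1) ^ 2)) := by
    have : 0 ≤ y := by linarith
    positivity
  have hB0 : 0 ≤ y ^ 2 * (1 / d ^ 3 - 1 / (d + 1) ^ 3) := by
    rw [e1]; positivity
  have e2 : 26 * y ^ 2 / (d + 1) ^ 4 = 2 * y ^ 2 / (d + 1) ^ 4 + y ^ 2 * (24 / (d + 1) ^ 4) := by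
    ring
  have e3 : y * (-1 / (d * (d + 1) ^ 2)) = - (y * (1 / (d * (d + 1) ^ 2))) := by ring
  rw [e2, e3, abs_le]
  constructor <;> nlinarith

lemma chi_bound (y : ℝ) (m : ℕ) : ∀ d : ℝ, d = y - m - 1 → 1 ≤ d →
    |chi (m + 1) (1 / y) - (y / d - y ^ 2 / d ^ 3)| ≤ 26 * y ^ 3 / d ^ 5 := by
  induction m with
  | zero =>
    intro d hd h1
    have hd0 : 0 < d := by linarith
    have hy : y = d + 1 := by simp at hd; linarith
    subst hy
    rw [zero_add, chi_one]
    have : 1 - ((d + 1) / d - (d + 1) ^ 2 / d ^ 3) = (2 * d + 1) / d ^ 3 := by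
      field_simp
      ring
    rw [this, abs_of_nonneg (by positivity), div_le_div_iff₀ (by positivity) (by positivity)]
    have h3 : (2 * d + 1) * d ^ 2 ≤ 26 * (d + 1) ^ 3 := by nlinarith [pow_pos hd0 2, pow_pos hd0 3]
    nlinarith [mul_le_mul_of_nonneg_left h3 (pow_pos hd0 3).le]
  | succ m ih =>
    intro d hd h1
    push_cast at hd
    have hd0 : 0 < d := by linarith
    have hm : (0 : ℝ) ≤ m := Nat.cast_nonneg m
    have hyd : d + 1 ≤ y := by linarith
    have hy0 : 0 < y := by linarith
    have := ih (d + 1) (by linarith) (by linarith)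
    rw [chi_rec]
    set X := chi (m + 1) (1 / y)
    have hm1 : (m : ℝ) + 1 = y - (d + 1) := by linarith
    rw [hm1]
    have key : 1 + (y - (d + 1)) * (1 / y) * X - (y / d - y ^ 2 / d ^ 3)
        = (y * (-1 / (d * (d + 1) ^ 2)) + y ^ 2 * (1 / d ^ 3 - 1 / (d + 1) ^ 3))
          + (1 - (d + 1) / y) * (X - (y / (d + 1) - y ^ 2 / (d + 1) ^ 3)) := by
      field_simp
      ring
    have hq : 0 ≤ 1 - (d + 1) / y := by
      rw [sub_nonneg, div_le_one hy0]; exact hyd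
    rw [key]
    refine (abs_add_le _ _).trans ?_
    rw [abs_mul, abs_of_nonneg hq]
    have h2 := mul_le_mul_of_nonneg_left this hq
    have h3 := resid_bound y d h1 hyd
    have h4 : 26 * y ^ 2 / (d + 1) ^ 4 + (1 - (d + 1) / y) * (26 * y ^ 3 / (d + 1) ^ 5)
        = 26 * y ^ 3 / (d + 1) ^ 5 := by
      field_simp
      ring
    have h5 : 26 * y ^ 3 / (d + 1) ^ 5 ≤ 26 * y ^ 3 / d ^ 5 := by
      gcongr
      linarith
    linarith

theorem chi_subcritical_expansion (r : ℝ) (hr : 1 / 2 < r) (y : ℕ → ℝ)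
    (hypos : ∀ n, 0 < y n)
    (hy : ∀ᶠ n : ℕ in atTop, (n : ℝ) + (n : ℝ) ^ r ≤ y n) :
    (∃ E : ℕ → ℝ,
        (∀ᶠ n : ℕ in atTop,
          chi n (1 / y n) =
            (y n / (y n - n)) * (1 - y n / (y n - n) ^ 2 + E n)) ∧
        E =O[atTop] fun n : ℕ => (y n) ^ 2 / (y n - n) ^ 4) ∧
      Tendsto (fun n : ℕ => chi n (1 / y n) / (y n / (y n - n))) atTop (nhds 1) := by
  have hev : ∀ᶠ n : ℕ in atTop, 1 ≤ y n - n ∧ (n : ℝ) ^ r ≤ y n - n ∧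
      |chi n (1 / y n) / (y n / (y n - n)) - (1 - y n / (y n - n) ^ 2)|
        ≤ 26 * ((y n) ^ 2 / (y n - n) ^ 4) := by
    filter_upwards [hy, eventually_ge_atTop 1] with n hn h1
    have hp : (1 : ℝ) ≤ (n : ℝ) ^ r :=
      Real.one_le_rpow (by exact_mod_cast h1) (by linarith)
    have hd : 1 ≤ y n - n := by linarith
    refine ⟨hd, by linarith, ?_⟩
    obtain ⟨m, rfl⟩ : ∃ m, n = m + 1 := ⟨n - 1, by omega⟩
    have hb := chi_bound (y (m + 1)) m (y (m + 1) - ((m + 1 : ℕ) : ℝ)) (by push_cast; ring) hd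
    have hy0 := hypos (m + 1)
    generalize y (m + 1) - ((m + 1 : ℕ) : ℝ) = d at *
    generalize y (m + 1) = Y at *
    generalize chi (m + 1) (1 / Y) = X at *
    have hd0 : 0 < d := by linarith
    have e : X / (Y / d) - (1 - Y / d ^ 2) = (X - (Y / d - Y ^ 2 / d ^ 3)) * (d / Y) := by
      field_simp
    have hq : 0 < d / Y := by positivity
    rw [e, abs_mul, abs_of_pos hq]
    refine (mul_le_mul_of_nonneg_right hb hq.le).trans (le_of_eq ?_)
    field_simp
  set E : ℕ → ℝ := fun n => chi n (1 / y n) / (y n / (y n - n)) - (1 - y n / (y n - n) ^ 2)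
    with hE
  have hO : E =O[atTop] fun n : ℕ => (y n) ^ 2 / (y n - n) ^ 4 := by
    refine IsBigO.of_bound 26 ?_
    filter_upwards [hev] with n hn
    have h0 : 0 ≤ (y n) ^ 2 / (y n - n) ^ 4 := by positivity
    rw [Real.norm_eq_abs, Real.norm_of_nonneg h0]
    exact hn.2.2
  have hlim : Tendsto (fun n : ℕ => y n / (y n - n) ^ 2) atTop (nhds 0) := by
    have t1 : Tendsto (fun n : ℕ => (n : ℝ) ^ (-r)) atTop (nhds 0) :=
      (tendsto_rpow_neg_atTop (by linarith)).comp tendsto_natCast_atTop_atTop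
    have t2 : Tendsto (fun n : ℕ => (n : ℝ) ^ (-(2 * r - 1))) atTop (nhds 0) :=
      (tendsto_rpow_neg_atTop (by linarith)).comp tendsto_natCast_atTop_atTop
    have t3 := t1.add t2
    rw [add_zero] at t3
    refine tendsto_of_tendsto_of_tendsto_of_le_of_le' tendsto_const_nhds t3 ?_ ?_
    · exact Eventually.of_forall fun n => by have := hypos n; positivity
    · filter_upwards [hev, eventually_ge_atTop 1] with n hn h1
      have hn0 : (0 : ℝ) < n := by exact_mod_cast h1
      have hp : 0 < (n : ℝ) ^ r := Real.rpow_pos_of_pos hn0 r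
      have e2 : (n : ℝ) ^ (-(2 * r - 1)) = n / ((n : ℝ) ^ r) ^ 2 := by
        rw [show -(2 * r - 1) = 1 - (r + r) by ring, Real.rpow_sub hn0, Real.rpow_one,
          Real.rpow_add hn0, sq]
      rw [e2, Real.rpow_neg hn0.le]
      have hd0 : 0 < y n - n := by linarith [hn.1]
      have e3 : y n / (y n - n) ^ 2 = (y n - n)⁻¹ + n / (y n - n) ^ 2 := by
        field_simp
        ring
      rw [e3]
      have := hn.2.1
      gcongr
  have hE0 : Tendsto E atTop (nhds 0) := by
    refine hO.trans_tendsto ?_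
    have := hlim.pow 2
    simp only [div_pow, ← pow_mul] at this
    simpa using this
  refine ⟨⟨E, ?_, hO⟩, ?_⟩
  · filter_upwards [hev] with n hn
    have hd0 : y n - n ≠ 0 := by linarith [hn.1]
    have hy0 := (hypos n).ne'
    have hne : y n / (y n - n) ≠ 0 := div_ne_zero hy0 hd0
    simp only [hE]
    rw [add_sub_cancel, mul_div_cancel₀ _ hne]
  · have := (hE0.add ((tendsto_const_nhds (x := (1 : ℝ))).sub hlim))
    simpa [hE] using this
end

section
/- If τ_n → τ in ℝ and z_n = 1/(n + τ_n n^{1/2}), then χ_{z_n}^{(n)} ∼ √(2πn) e^{τ²/2} (1/2) erfc(τ/√2) as n → ∞. -/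
open Finset Filter Real

/-- The complementary error function `erfc(x) = (2/√π) ∫_x^∞ e^{-t²} dt`. -/
noncomputable def erfc (x : ℝ) : ℝ :=
  2 / Real.sqrt π * ∫ t in Set.Ioi x, Real.exp (-t ^ 2)

lemma aux_log_lower {x : ℝ} (hx : 0 ≤ x) : x - x ^ 2 / 2 ≤ Real.log (1 + x) := by
  refine le_trans ?_ (Real.le_log_one_add_of_nonneg hx)
  rw [le_div_iff₀ (by linarith)]
  nlinarith [pow_nonneg hx 3]

lemma aux_log_upper {x : ℝ} (hx : 0 ≤ x) :
    Real.log (1 + x) ≤ x - x ^ 2 / (2 * (1 + x)) := by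
  have h : Real.log (1 + x) ≤ Real.sinh (Real.log (1 + x)) :=
    Real.self_le_sinh_iff.2 (Real.log_nonneg (by linarith))
  rw [Real.sinh_log (by linarith)] at h
  refine h.trans (le_of_eq ?_)
  have : (1 + x) ≠ 0 := by positivity
  field_simp
  ring

lemma aux_moment (N : ℕ) {r : ℝ} (hr : 0 < r) :
    ∫ t in Set.Ioi (0 : ℝ), t ^ N * Real.exp (-(r * t)) = (1 / r) ^ (N + 1) * (N.factorial : ℝ) := by
  have key := Real.integral_rpow_mul_exp_neg_mul_Ioi (a := (N : ℝ) + 1) (by positivity) hr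
  rw [Real.Gamma_nat_eq_factorial] at key
  simp only [add_sub_cancel_right, Real.rpow_natCast] at key
  rw [key]
  congr 1
  exact_mod_cast Real.rpow_natCast (1 / r) (N + 1)

lemma aux_moment_int (N : ℕ) {r : ℝ} (hr : 0 < r) :
    MeasureTheory.IntegrableOn (fun t : ℝ => t ^ N * Real.exp (-(r * t))) (Set.Ioi 0) :=
  MeasureTheory.Integrable.of_integral_ne_zero (by rw [aux_moment N hr]; positivity)

lemma aux_chi (n : ℕ) (hn : 0 < n) (m r : ℝ) (hr : 0 < r) :
    chi n (1 / (m * r)) =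
      r * ∫ u in Set.Ioi (0 : ℝ), (1 + u / m) ^ (n - 1) * Real.exp (-(r * u)) := by
  obtain ⟨k, rfl⟩ : ∃ k, n = k + 1 := ⟨n - 1, by omega⟩
  have h1 : ∀ u : ℝ, (1 + u / m) ^ k * Real.exp (-(r * u)) =
      ∑ N ∈ Finset.range (k + 1),
        ((k.choose N : ℝ) * (1 / m) ^ N) * (u ^ N * Real.exp (-(r * u))) := by
    intro u
    rw [add_comm, add_pow, Finset.sum_mul]
    refine Finset.sum_congr rfl fun N _ => ?_
    rw [div_pow, one_pow, one_div_pow]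
    ring
  simp only [Nat.add_sub_cancel, h1]
  rw [MeasureTheory.integral_finsetSum _ (fun N _ => (aux_moment_int N hr).const_mul _)]
  rw [chi, Finset.mul_sum]
  refine Finset.sum_congr rfl fun N hN => ?_
  rw [MeasureTheory.integral_const_mul, aux_moment N hr, sawCount]
  have hNk : N ≤ k := by simpa [Nat.lt_succ_iff] using hN
  have hc : (k.choose N : ℝ) * (N.factorial : ℝ) * ((k - N).factorial : ℝ) = k.factorial := by
    exact_mod_cast Nat.choose_mul_factorial_mul_factorial hNk
  simp only [Nat.add_sub_cancel]
  rw [← hc]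
  have : ((k - N).factorial : ℝ) ≠ 0 := by positivity
  rw [mul_div_assoc, div_self this, mul_one, one_div_pow, one_div_pow, one_div_pow, mul_pow, pow_succ]
  simp only [one_div, mul_inv]
  field_simp

lemma aux_gauss (τ₀ : ℝ) :
    ∫ u in Set.Ioi (0 : ℝ), Real.exp (-τ₀ * u - u ^ 2 / 2) =
      Real.sqrt (2 * π) * Real.exp (τ₀ ^ 2 / 2) * ((1 : ℝ) / 2) * erfc (τ₀ / Real.sqrt 2) := by
  have h2 : (0 : ℝ) < Real.sqrt 2 := by positivity
  have e1 := (MeasureTheory.measurePreserving_add_right MeasureTheory.volume τ₀).setIntegral_preimage_emb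
    (measurableEmbedding_addRight τ₀) (fun v : ℝ => Real.exp (-v ^ 2 / 2)) (Set.Ioi τ₀)
  have e2 := MeasureTheory.integral_comp_mul_left_Ioi (fun t : ℝ => Real.exp (-t ^ 2)) τ₀
    (b := (Real.sqrt 2)⁻¹) (by positivity)
  have e3 : (fun v : ℝ => Real.exp (-((Real.sqrt 2)⁻¹ * v) ^ 2)) =
      fun v : ℝ => Real.exp (-v ^ 2 / 2) := by
    funext v
    rw [mul_pow, inv_pow, Real.sq_sqrt (by norm_num)]
    congr 1; ring
  rw [e3, inv_inv, smul_eq_mul] at e2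
  rw [e2] at e1
  have e4 : (fun x : ℝ => x + τ₀) ⁻¹' Set.Ioi τ₀ = Set.Ioi 0 := by
    ext x; simp
  rw [e4] at e1
  have e5 : (fun u : ℝ => Real.exp (-τ₀ * u - u ^ 2 / 2)) =
      fun u : ℝ => Real.exp (τ₀ ^ 2 / 2) * Real.exp (-(u + τ₀) ^ 2 / 2) := by
    funext u
    rw [← Real.exp_add]
    congr 1; ring
  rw [e5, MeasureTheory.integral_const_mul, e1, erfc, Real.sqrt_mul (by norm_num)]
  have hp : (0 : ℝ) < Real.sqrt π := Real.sqrt_pos.2 Real.pi_pos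
  rw [show (Real.sqrt 2)⁻¹ * τ₀ = τ₀ / Real.sqrt 2 by ring]
  field_simp

lemma aux_erfc_pos (x : ℝ) : 0 < erfc x := by
  have hp : (0 : ℝ) < Real.sqrt π := Real.sqrt_pos.2 Real.pi_pos
  refine mul_pos (by positivity) ?_
  have hi : MeasureTheory.Integrable (fun t : ℝ => Real.exp (-t ^ 2)) := by
    simpa using integrable_exp_neg_mul_sq (b := 1) one_pos
  rw [MeasureTheory.setIntegral_pos_iff_support_of_nonneg_ae
    (Filter.Eventually.of_forall fun t => (Real.exp_pos _).le) hi.integrableOn]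
  have : Function.support (fun t : ℝ => Real.exp (-t ^ 2)) = Set.univ := by
    ext t; simp [Real.exp_ne_zero]
  rw [this, Set.univ_inter, Real.volume_Ioi]
  exact ENNReal.zero_lt_top

lemma aux_sqrt_tendsto : Tendsto (fun n : ℕ => Real.sqrt n) atTop atTop :=
  Real.tendsto_sqrt_atTop.comp tendsto_natCast_atTop_atTop

lemma aux_m (τ : ℕ → ℝ) (τ₀ : ℝ) (hτ : Tendsto τ atTop (nhds τ₀)) :
    Tendsto (fun n : ℕ => Real.sqrt n + τ n) atTop atTop :=
  aux_sqrt_tendsto.atTop_add hτ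

lemma aux_A (τ : ℕ → ℝ) (τ₀ : ℝ) (hτ : Tendsto τ atTop (nhds τ₀)) :
    Tendsto (fun n : ℕ => ((n : ℝ) - 1) / (Real.sqrt n + τ n) - Real.sqrt n)
      atTop (nhds (-τ₀)) := by
  have hw : Tendsto (fun n : ℕ => (Real.sqrt n)⁻¹) atTop (nhds 0) :=
    tendsto_inv_atTop_zero.comp aux_sqrt_tendsto
  have h : Tendsto (fun n : ℕ => -((Real.sqrt n)⁻¹ + τ n) / (1 + τ n * (Real.sqrt n)⁻¹))
      atTop (nhds (-(0 + τ₀) / (1 + τ₀ * 0))) :=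
    (hw.add hτ).neg.div ((hτ.mul hw).const_add 1) (by simp)
  rw [show -(0 + τ₀) / (1 + τ₀ * 0) = -τ₀ by simp] at h
  refine h.congr' ?_
  filter_upwards [aux_sqrt_tendsto.eventually_gt_atTop 0,
    (aux_m τ τ₀ hτ).eventually_gt_atTop 0] with n hs hm
  have hn : (n : ℝ) = Real.sqrt n ^ 2 := (Real.sq_sqrt (Nat.cast_nonneg n)).symm
  generalize Real.sqrt n = s at *
  rw [hn]
  have h1 : 1 + τ n * s⁻¹ = (s + τ n) / s := by field_simp
  rw [h1]
  field_simp
  ring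

lemma aux_B (τ : ℕ → ℝ) (τ₀ : ℝ) (hτ : Tendsto τ atTop (nhds τ₀)) :
    Tendsto (fun n : ℕ => ((n : ℝ) - 1) / (Real.sqrt n + τ n) ^ 2)
      atTop (nhds 1) := by
  have hw : Tendsto (fun n : ℕ => (Real.sqrt n)⁻¹) atTop (nhds 0) :=
    tendsto_inv_atTop_zero.comp aux_sqrt_tendsto
  have h : Tendsto (fun n : ℕ => (1 - (Real.sqrt n)⁻¹ ^ 2) / (1 + τ n * (Real.sqrt n)⁻¹) ^ 2)
      atTop (nhds ((1 - 0 ^ 2) / (1 + τ₀ * 0) ^ 2)) :=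
    ((hw.pow 2).const_sub 1).div (((hτ.mul hw).const_add 1).pow 2) (by simp)
  rw [show ((1 : ℝ) - 0 ^ 2) / (1 + τ₀ * 0) ^ 2 = 1 by simp] at h
  refine h.congr' ?_
  filter_upwards [aux_sqrt_tendsto.eventually_gt_atTop 0,
    (aux_m τ τ₀ hτ).eventually_gt_atTop 0] with n hs hm
  have hn : (n : ℝ) = Real.sqrt n ^ 2 := (Real.sq_sqrt (Nat.cast_nonneg n)).symm
  generalize Real.sqrt n = s at *
  rw [hn]
  have h1 : 1 + τ n * s⁻¹ = (s + τ n) / s := by field_simp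
  rw [h1]
  field_simp

lemma aux_integrand (n : ℕ) (hn : 0 < n) (m r u : ℝ) (hm : 0 < m) (hu : 0 < u) :
    (1 + u / m) ^ (n - 1) * Real.exp (-(r * u)) =
      Real.exp (((n : ℝ) - 1) * Real.log (1 + u / m) - r * u) := by
  have h : 0 < 1 + u / m := by positivity
  rw [sub_eq_add_neg _ (r * u), Real.exp_add]
  congr 1
  rw [mul_comm, Real.exp_mul, Real.exp_log h, ← Real.rpow_natCast]
  congr 1
  rw [Nat.cast_sub hn]; simp

lemma aux_upper (n : ℕ) (hn : 0 < n) (m r u : ℝ) (hm : 0 < m) (hu : 0 < u) :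
    ((n : ℝ) - 1) * Real.log (1 + u / m) - r * u ≤
      (((n : ℝ) - 1) / m - r) * u - ((n : ℝ) - 1) / m ^ 2 * (u ^ 2 / (2 * (1 + u / m))) := by
  have hn' : (0 : ℝ) ≤ (n : ℝ) - 1 := by
    have : (1 : ℝ) ≤ n := by exact_mod_cast hn
    linarith
  have := mul_le_mul_of_nonneg_left (aux_log_upper (x := u / m) (by positivity)) hn'
  have e : ((n : ℝ) - 1) * (u / m - (u / m) ^ 2 / (2 * (1 + u / m))) - r * u =
    (((n : ℝ) - 1) / m - r) * u - ((n : ℝ) - 1) / m ^ 2 * (u ^ 2 / (2 * (1 + u / m))) := by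
    ring
  linarith

lemma aux_lower (n : ℕ) (hn : 0 < n) (m r u : ℝ) (hm : 0 < m) (hu : 0 < u) :
    (((n : ℝ) - 1) / m - r) * u - ((n : ℝ) - 1) / m ^ 2 * (u ^ 2 / 2) ≤
    ((n : ℝ) - 1) * Real.log (1 + u / m) - r * u := by
  have hn' : (0 : ℝ) ≤ (n : ℝ) - 1 := by
    have : (1 : ℝ) ≤ n := by exact_mod_cast hn
    linarith
  have := mul_le_mul_of_nonneg_left (aux_log_lower (x := u / m) (by positivity)) hn'
  have e : ((n : ℝ) - 1) * (u / m - (u / m) ^ 2 / 2) - r * u =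
    (((n : ℝ) - 1) / m - r) * u - ((n : ℝ) - 1) / m ^ 2 * (u ^ 2 / 2) := by
    ring
  linarith

lemma aux_integral (τ : ℕ → ℝ) (τ₀ : ℝ) (hτ : Tendsto τ atTop (nhds τ₀)) :
    Tendsto (fun n : ℕ => ∫ u in Set.Ioi (0 : ℝ),
        (1 + u / (Real.sqrt n + τ n)) ^ (n - 1) * Real.exp (-(Real.sqrt n * u))) atTop
      (nhds (∫ u in Set.Ioi (0 : ℝ), Real.exp (-τ₀ * u - u ^ 2 / 2))) := by
  have hA := aux_A τ τ₀ hτ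
  have hB := aux_B τ τ₀ hτ
  have hM := aux_m τ τ₀ hτ
  obtain ⟨M, hMdef⟩ : ∃ M : ℝ, M = 4 * (|τ₀| + 2) := ⟨_, rfl⟩
  have hMpos : 0 < M := by rw [hMdef]; positivity
  refine MeasureTheory.tendsto_integral_filter_of_dominated_convergence
    (fun u => Real.exp (M ^ 2 / 4) * Real.exp (-u)) ?_ ?_ ?_ ?_
  · refine Filter.Eventually.of_forall fun n => Continuous.aestronglyMeasurable ?_
    fun_prop
  · filter_upwards [hM.eventually_ge_atTop M, eventually_gt_atTop 0,
      hA.eventually_lt_const (show -τ₀ < |τ₀| + 1 by linarith [neg_le_abs τ₀]),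
      hB.eventually_const_lt (show (1 / 2 : ℝ) < 1 by norm_num)] with n hm hn hAn hBn
    rw [MeasureTheory.ae_restrict_iff' measurableSet_Ioi]
    refine Filter.Eventually.of_forall fun u hu => ?_
    have hu : 0 < u := hu
    have hmp : 0 < Real.sqrt n + τ n := by linarith
    rw [aux_integrand n hn _ _ u hmp hu, Real.norm_eq_abs, abs_of_pos (Real.exp_pos _),
      ← Real.exp_add, Real.exp_le_exp]
    refine (aux_upper n hn _ _ u hmp hu).trans ?_
    have h1 := mul_le_mul_of_nonneg_right hAn.le hu.le
    have h2 : (M * u - M ^ 2) / 2 ≤ u ^ 2 / (2 * (1 + u / (Real.sqrt n + τ n))) := by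
      have h3 : u ^ 2 / (2 * (1 + u / M)) ≤ u ^ 2 / (2 * (1 + u / (Real.sqrt n + τ n))) := by
        gcongr
      refine le_trans ?_ h3
      have h4 : u ^ 2 / (2 * (1 + u / M)) = M * u ^ 2 / (2 * (M + u)) := by
        field_simp
      rw [h4, le_div_iff₀ (by positivity)]
      nlinarith [pow_pos hMpos 3]
    have h5 : 0 ≤ u ^ 2 / (2 * (1 + u / (Real.sqrt n + τ n))) := by positivity
    have h6 := mul_le_mul_of_nonneg_right hBn.le h5
    have h7 : M * u = 4 * ((|τ₀| + 1) * u) + 4 * u := by rw [hMdef]; ring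
    linarith
  · exact (integrableOn_exp_neg_Ioi 0).const_mul _
  · rw [MeasureTheory.ae_restrict_iff' measurableSet_Ioi]
    refine Filter.Eventually.of_forall fun u hu => ?_
    have hu : 0 < u := hu
    have hlim : Tendsto (fun n : ℕ => ((n : ℝ) - 1) * Real.log (1 + u / (Real.sqrt n + τ n)) -
        Real.sqrt n * u) atTop (nhds (-τ₀ * u - u ^ 2 / 2)) := by
      have hu0 : Tendsto (fun n : ℕ => u / (Real.sqrt n + τ n)) atTop (nhds 0) :=
        hM.const_div_atTop u
      have l1 := (hA.mul_const u).sub (hB.mul_const (u ^ 2 / 2))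
      have l2 := (hA.mul_const u).sub (hB.mul
        ((tendsto_const_nhds (x := u ^ 2)).div ((hu0.const_add 1).const_mul 2) (by norm_num)))
      rw [one_mul] at l1
      rw [add_zero, mul_one, one_mul] at l2
      refine tendsto_of_tendsto_of_tendsto_of_le_of_le' l1 l2 ?_ ?_
      · filter_upwards [hM.eventually_gt_atTop 0, eventually_gt_atTop 0] with n hm hn
        exact aux_lower n hn _ _ u hm hu
      · filter_upwards [hM.eventually_gt_atTop 0, eventually_gt_atTop 0] with n hm hn
        exact aux_upper n hn _ _ u hm hu
    refine ((Real.continuous_exp.tendsto _).comp hlim).congr' ?_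
    filter_upwards [hM.eventually_gt_atTop 0, eventually_gt_atTop 0] with n hm hn
    exact (aux_integrand n hn _ _ u hm hu).symm

theorem chi_critical_window (τ : ℕ → ℝ) (τ₀ : ℝ)
    (hτ : Tendsto τ atTop (nhds τ₀)) :
    Tendsto
      (fun n : ℕ =>
        chi n (1 / ((n : ℝ) + τ n * Real.sqrt n)) /
          (Real.sqrt (2 * π * n) * Real.exp (τ₀ ^ 2 / 2) *
            ((1 : ℝ) / 2) * erfc (τ₀ / Real.sqrt 2)))
      atTop (nhds 1) := by
  have hI := aux_integral τ τ₀ hτ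
  have hpos : 0 < Real.sqrt (2 * π) * Real.exp (τ₀ ^ 2 / 2) * ((1 : ℝ) / 2) *
      erfc (τ₀ / Real.sqrt 2) := by
    have := aux_erfc_pos (τ₀ / Real.sqrt 2)
    have : (0 : ℝ) < Real.sqrt (2 * π) := Real.sqrt_pos.2 (by positivity)
    positivity
  rw [aux_gauss] at hI
  have h := hI.div_const (Real.sqrt (2 * π) * Real.exp (τ₀ ^ 2 / 2) * ((1 : ℝ) / 2) *
      erfc (τ₀ / Real.sqrt 2))
  rw [div_self hpos.ne'] at h
  refine h.congr' ?_
  filter_upwards [eventually_gt_atTop 0] with n hn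
  have hs : 0 < Real.sqrt n := Real.sqrt_pos.2 (by exact_mod_cast hn)
  have e : (n : ℝ) + τ n * Real.sqrt n = (Real.sqrt n + τ n) * Real.sqrt n := by
    rw [add_mul, Real.mul_self_sqrt (Nat.cast_nonneg n)]
  rw [e, aux_chi n hn _ _ hs, Real.sqrt_mul (by positivity) (n : ℝ)]
  rw [show Real.sqrt (2 * π) * Real.sqrt n * Real.exp (τ₀ ^ 2 / 2) * ((1 : ℝ) / 2) *
      erfc (τ₀ / Real.sqrt 2) = Real.sqrt n * (Real.sqrt (2 * π) * Real.exp (τ₀ ^ 2 / 2) *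
      ((1 : ℝ) / 2) * erfc (τ₀ / Real.sqrt 2)) by ring]
  rw [mul_div_mul_left _ _ hs.ne']
end

section
/- Let r > 1/2 and z_n with y_n = 1/z_n ≥ n + n^r eventually (subcritical). Then E_{z_n}^{(n)}(L) ∼ n/(y_n − n) as n → ∞. In particular, for z = 1/(sn) with s > 1 fixed, E_z^{(n)}(L) → 1/(s−1). -/
open Finset Filter

/-- The expected length `E_z^{(n)}(L) = (∑_N N c_N^{(n)} z^N)/χ_z^{(n)}`. -/
noncomputable def meanL (n : ℕ) (z : ℝ) : ℝ :=
  (∑ N ∈ Finset.range n, (N : ℝ) * sawCount n N * z ^ N) / chi n z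

lemma saw_shift (k : ℕ) (y : ℝ) (hy : 0 < y) (f : ℕ → ℝ) (h0 : f 0 = 0) :
    y * ∑ N ∈ Finset.range (k + 1), f N * (sawCount (k + 1) N * (1 / y) ^ N) =
      ∑ N ∈ Finset.range (k + 1),
        f (N + 1) * ((k : ℝ) - N) * (sawCount (k + 1) N * (1 / y) ^ N) := by
  rw [Finset.sum_range_succ', Finset.sum_range_succ, h0]
  simp only [zero_mul, add_zero, sub_self, mul_zero]
  rw [Finset.mul_sum]
  refine Finset.sum_congr rfl fun N hN => ?_
  have hN' : N < k := Finset.mem_range.mp hN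
  obtain ⟨j, rfl⟩ : ∃ j, k = N + 1 + j := ⟨k - (N + 1), by omega⟩
  unfold sawCount
  have e1 : N + 1 + j + 1 - 1 - (N + 1) = j := by omega
  have e2 : N + 1 + j + 1 - 1 - N = j + 1 := by omega
  rw [e1, e2, Nat.factorial_succ j]
  have hj : (Nat.factorial j : ℝ) ≠ 0 := by positivity
  have hj1 : (j : ℝ) + 1 ≠ 0 := by positivity
  push_cast
  rw [pow_succ]
  field_simp
  ring

lemma meanL_bounds (n : ℕ) (hn : 1 ≤ n) (y : ℝ) (hd : 0 < y - n) :
    meanL n (1 / y) / ((n : ℝ) / (y - n)) ≤ 1 ∧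
    1 - 1 / (n : ℝ) - 2 * (n / (y - n) ^ 2) - 3 * (1 / (y - n)) ≤
      meanL n (1 / y) / ((n : ℝ) / (y - n)) := by
  obtain ⟨k, rfl⟩ : ∃ k, n = k + 1 := ⟨n - 1, by omega⟩
  have hy : 0 < y := by
    have : (0 : ℝ) ≤ ((k + 1 : ℕ) : ℝ) := by positivity
    linarith
  have h1 := saw_shift k y hy (fun N => (N : ℝ)) (by simp)
  have h2 := saw_shift k y hy (fun N => (N : ℝ) ^ 2) (by simp)
  set a : ℕ → ℝ := fun N => sawCount (k + 1) N * (1 / y) ^ N with ha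
  have apos : ∀ N, 0 < a N := by
    intro N
    simp only [ha, sawCount]
    positivity
  set S := ∑ N ∈ Finset.range (k + 1), a N with hS
  set M := ∑ N ∈ Finset.range (k + 1), (N : ℝ) * a N with hM
  set Q := ∑ N ∈ Finset.range (k + 1), (N : ℝ) ^ 2 * a N with hQ
  have Spos : 0 < S := Finset.sum_pos (fun N _ => apos N) (by simp)
  have M0 : 0 ≤ M := Finset.sum_nonneg fun N _ => mul_nonneg (by positivity) (apos N).le
  have Q0 : 0 ≤ Q := Finset.sum_nonneg fun N _ => mul_nonneg (by positivity) (apos N).le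
  have H1 : y * M = k * S + (k - 1) * M - Q := by
    refine h1.trans ?_
    rw [hS, hM, hQ, Finset.mul_sum, Finset.mul_sum, ← Finset.sum_add_distrib,
      ← Finset.sum_sub_distrib]
    refine Finset.sum_congr rfl fun N _ => ?_
    simp only [ha]
    push_cast
    ring
  have H2 : y * Q ≤ k * (Q + 2 * M + S) := by
    refine h2.trans_le ?_
    rw [hS, hM, hQ, Finset.mul_sum, ← Finset.sum_add_distrib, ← Finset.sum_add_distrib,
      Finset.mul_sum]
    refine Finset.sum_le_sum fun N _ => ?_
    have : 0 ≤ (N : ℝ) * (((N : ℝ) + 1) ^ 2 * a N) := by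
      have := (apos N).le
      positivity
    have e : sawCount (k + 1) N * (1 / y) ^ N = a N := rfl
    rw [e]
    push_cast
    nlinarith
  have hm : meanL (k + 1) (1 / y) = M / S := by
    unfold meanL chi
    simp only [hM, hS, ha, mul_assoc]
  rw [hm]
  set m := M / S with hmdef
  set q := Q / S with hqdef
  have eM : M = m * S := by rw [hmdef]; field_simp
  have eQ : Q = q * S := by rw [hqdef]; field_simp
  have m0 : 0 ≤ m := by positivity
  have q0 : 0 ≤ q := by positivity
  have H1' : y * m = k + (k - 1) * m - q := by
    have : (y * m) * S = (k + (k - 1) * m - q) * S := by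
      rw [eM, eQ] at H1; linarith
    exact mul_right_cancel₀ Spos.ne' this
  have H2' : y * q ≤ k * (q + 2 * m + 1) := by
    have : (y * q) * S ≤ (k * (q + 2 * m + 1)) * S := by
      rw [eM, eQ] at H2; linarith
    exact le_of_mul_le_mul_right this Spos
  obtain ⟨d, hdd⟩ : ∃ d, d = y - ((k + 1 : ℕ) : ℝ) := ⟨_, rfl⟩
  obtain ⟨ν, hν⟩ : ∃ ν, ν = ((k + 1 : ℕ) : ℝ) := ⟨_, rfl⟩
  rw [← hdd] at hd ⊢
  rw [← hν] at hdd ⊢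
  have hk : (k : ℝ) = ν - 1 := by rw [hν]; push_cast; ring
  have νpos : 0 < ν := by rw [hν]; positivity
  have hyy : y = ν + d := by rw [hdd]; ring
  rw [hk, hyy] at H1' H2'
  clear_value m q
  have k0 : 0 ≤ ν - 1 := by rw [← hk]; positivity
  have A1 : m * d = ν - 1 - q - 2 * m := by linarith
  have A2 : m * d ≤ ν := by linarith
  have A3 : q * d ≤ ν * (2 * m + 1) := by nlinarith
  have B2 : m ≤ ν / d := by rw [le_div_iff₀ hd]; exact A2
  have B3 : q ≤ ν * (2 * (ν / d) + 1) / d := by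
    rw [le_div_iff₀ hd]
    refine A3.trans ?_
    gcongr
  have e : m / (ν / d) = m * d / ν := by field_simp
  rw [e]
  refine ⟨by rw [div_le_one νpos]; exact A2, ?_⟩
  rw [le_div_iff₀ νpos, A1]
  have : (1 - 1 / ν - 2 * (ν / d ^ 2) - 3 * (1 / d)) * ν =
      ν - 1 - ν * (2 * (ν / d) + 1) / d - 2 * (ν / d) := by
    field_simp
    ring
  linarith

lemma meanL_ratio (y : ℕ → ℝ) (hd : ∀ᶠ n : ℕ in atTop, 0 < y n - n)
    (h1 : Tendsto (fun n : ℕ => (n : ℝ) / (y n - n) ^ 2) atTop (nhds 0))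
    (h2 : Tendsto (fun n : ℕ => 1 / (y n - n)) atTop (nhds 0)) :
    Tendsto (fun n : ℕ => meanL n (1 / y n) / ((n : ℝ) / (y n - n))) atTop (nhds 1) := by
  have h0 : Tendsto (fun n : ℕ => 1 / (n : ℝ)) atTop (nhds 0) :=
    tendsto_one_div_atTop_nhds_zero_nat
  have hl : Tendsto (fun n : ℕ => 1 - 1 / (n : ℝ) - 2 * (n / (y n - n) ^ 2)
      - 3 * (1 / (y n - n))) atTop (nhds 1) := by
    have := ((h0.const_sub 1).sub (h1.const_mul 2)).sub (h2.const_mul 3)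
    simpa using this
  refine tendsto_of_tendsto_of_tendsto_of_le_of_le' hl tendsto_const_nhds ?_ ?_
  · filter_upwards [hd, eventually_ge_atTop 1] with n h hn
    exact (meanL_bounds n hn (y n) h).2
  · filter_upwards [hd, eventually_ge_atTop 1] with n h hn
    exact (meanL_bounds n hn (y n) h).1

theorem meanL_subcritical (r : ℝ) (hr : 1 / 2 < r) (y : ℕ → ℝ)
    (hypos : ∀ n, 0 < y n)
    (hy : ∀ᶠ n : ℕ in atTop, (n : ℝ) + (n : ℝ) ^ r ≤ y n) :
    Tendsto (fun n : ℕ => meanL n (1 / y n) / ((n : ℝ) / (y n - n)))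
      atTop (nhds 1) ∧
    ∀ s : ℝ, 1 < s →
      Tendsto (fun n : ℕ => meanL n (1 / (s * n))) atTop (nhds (1 / (s - 1))) := by
  have h0 : Tendsto (fun n : ℕ => 1 / (n : ℝ)) atTop (nhds 0) :=
    tendsto_one_div_atTop_nhds_zero_nat
  constructor
  · have hd : ∀ᶠ n : ℕ in atTop, 0 < (n : ℝ) ^ r ∧ (n : ℝ) ^ r ≤ y n - n := by
      filter_upwards [hy, eventually_ge_atTop 1] with n h hn
      have : (0 : ℝ) < n := by exact_mod_cast hn
      exact ⟨by positivity, by linarith⟩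
    refine meanL_ratio y (hd.mono fun n h => h.1.trans_le h.2) ?_ ?_
    · have ht : Tendsto (fun n : ℕ => (n : ℝ) ^ (-(2 * r - 1))) atTop (nhds 0) :=
        (tendsto_rpow_neg_atTop (by linarith)).comp tendsto_natCast_atTop_atTop
      refine squeeze_zero' (Eventually.of_forall fun n => by positivity) ?_ ht
      filter_upwards [hd, eventually_ge_atTop 1] with n h hn
      have hp : (0 : ℝ) < n := by exact_mod_cast hn
      have e : (n : ℝ) ^ (-(2 * r - 1)) = n / ((n : ℝ) ^ r) ^ 2 := by
        rw [← Real.rpow_natCast ((n : ℝ) ^ r) 2, ← Real.rpow_mul hp.le]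
        rw [show -(2 * r - 1) = 1 - r * ((2 : ℕ) : ℝ) by push_cast; ring,
          Real.rpow_sub hp, Real.rpow_one]
      rw [e]
      have := h.1
      have := h.2
      gcongr
    · have ht : Tendsto (fun n : ℕ => (n : ℝ) ^ (-r)) atTop (nhds 0) :=
        (tendsto_rpow_neg_atTop (by linarith)).comp tendsto_natCast_atTop_atTop
      refine squeeze_zero' (hd.mono fun n h => ?_) ?_ ht
      · have := h.1.trans_le h.2
        positivity
      filter_upwards [hd] with n h
      rw [Real.rpow_neg (by positivity), ← one_div]
      exact one_div_le_one_div_of_le h.1 h.2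
  · intro s hs
    have hs' : 0 < s - 1 := by linarith
    have key := meanL_ratio (fun n => s * n) ?_ ?_ ?_
    · have := key.mul_const (1 / (s - 1))
      rw [one_mul] at this
      refine this.congr' ?_
      filter_upwards [eventually_ge_atTop 1] with n hn
      have hp : (0 : ℝ) < n := by exact_mod_cast hn
      rw [show s * (n : ℝ) - n = (s - 1) * n by ring]
      field_simp
    · filter_upwards [eventually_ge_atTop 1] with n hn
      have hp : (0 : ℝ) < n := by exact_mod_cast hn
      nlinarith
    · have := h0.const_mul (1 / (s - 1) ^ 2)
      rw [mul_zero] at this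
      refine this.congr' ?_
      filter_upwards [eventually_ge_atTop 1] with n hn
      have hp : (0 : ℝ) < n := by exact_mod_cast hn
      rw [show s * (n : ℝ) - n = (s - 1) * n by ring]
      field_simp
    · have := h0.const_mul (1 / (s - 1))
      rw [mul_zero] at this
      refine this.congr' ?_
      filter_upwards [eventually_ge_atTop 1] with n hn
      have hp : (0 : ℝ) < n := by exact_mod_cast hn
      rw [show s * (n : ℝ) - n = (s - 1) * n by ring]
      field_simp
end
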